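/- Let f(t) = ∑_{i=0}^n a_i t^i be a polynomial with integer coefficients such that a_n ≠ 0 and gcd(a_0, a_1, …, a_n) = 1 (f is primitive). For each prime p, let α_{p,1}, …, α_{p,n} denote the roots of f in the algebraic closure of ℚ_p, counted with multiplicity. Then log |a_n| = ∑_{p prime} ∑_{i : ‖α_{p,i}‖_p > 1} log ‖α_{p,i}‖_p, where all but finitely many summands on the right-hand side vanish, so the sum over primes is a finite sum. -/

import Mathlib

/-!
Fix a prime `p` and let `v` be the `p`-adic absolute value on the algebraic closure of `ℚ_p`. Its
Gauss norm, the maximum of the absolute values of the coefficients, is multiplicative because `v`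
is nonarchimedean (`Polynomial.gaussNorm_mul`). A primitive integer polynomial has Gauss norm `1`
(`gaussNorm_map_eq_one`), while `X - α` has Gauss norm `max 1 ‖α‖`. Factoring `f` into linear
factors therefore gives `1 = ‖aₙ‖ * ∏ max 1 ‖αᵢ‖`, and taking logarithms shows that the `p`-th
summand is `-log ‖aₙ‖ = v_p(aₙ) log p` (`padicRootLogSum_eq`). Summing over the primes dividing
`aₙ` gives `log |aₙ|` by unique factorization.
-/

open Polynomial

/-- The unique extension of the `p`-adic absolute value to the algebraic closure of `ℚ_[p]`
(with `|p|_p = 1/p`): for `α` with minimal polynomial of degree `d` over `ℚ_[p]` and constant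
coefficient `a₀`, one has `‖α‖_p = ‖a₀‖ ^ (1/d)`. -/
noncomputable def padicClosureAbs (p : ℕ) [Fact p.Prime] (α : AlgebraicClosure ℚ_[p]) : ℝ :=
  ‖(minpoly ℚ_[p] α).coeff 0‖ ^ (((minpoly ℚ_[p] α).natDegree : ℝ)⁻¹)

/-- For a prime `q`, the sum `∑_{‖α‖_q > 1} log ‖α‖_q` over the roots of `f` in the algebraic
closure of `ℚ_q`, counted with multiplicity. -/
noncomputable def padicRootLogSum (f : Polynomial ℤ) (q : Nat.Primes) : ℝ :=
  letI : Fact (Nat.Prime (q : ℕ)) := ⟨q.2⟩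
  ((f.aroots (AlgebraicClosure ℚ_[(q : ℕ)])).map
      (fun α => if 1 < padicClosureAbs (q : ℕ) α then Real.log (padicClosureAbs (q : ℕ) α)
        else 0)).sum

section LocalFactor

variable {p : ℕ} [Fact p.Prime]

/-- By the formula expressing the spectral norm through the constant coefficient of the minimal
polynomial, `padicClosureAbs` is Mathlib's norm on `PadicAlgCl p`; in particular it is a
nonarchimedean absolute value. -/
lemma padicClosureAbs_eq_norm (α : PadicAlgCl p) : padicClosureAbs p α = ‖α‖ := by
  rw [← PadicAlgCl.spectralNorm_eq, spectralNorm.spectralNorm_eq_norm_coeff_zero_rpow, one_div]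
  rfl

lemma PadicAlgCl.norm_intCast (z : ℤ) : ‖(z : PadicAlgCl p)‖ = ‖(z : ℚ_[p])‖ := by
  rw [← PadicAlgCl.norm_extends, map_intCast]

variable (p) in
/-- The norm of `PadicAlgCl p` as an absolute value, the form in which the Gauss norm takes it. -/
noncomputable abbrev padicAbv : AbsoluteValue (PadicAlgCl p) ℝ :=
  NormedField.toAbsoluteValue (PadicAlgCl p)

lemma padicAbv_apply (α : PadicAlgCl p) : padicAbv p α = ‖α‖ := rfl

lemma isNonarchimedean_padicAbv : IsNonarchimedean (padicAbv p) :=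
  PadicAlgCl.isNonarchimedean p

lemma gaussNorm_X_sub_C (α : PadicAlgCl p) :
    (X - C α).gaussNorm (padicAbv p) 1 = max 1 ‖α‖ := by
  have h0 : padicAbv p ((X - C α).coeff 0) = ‖α‖ := by
    rw [padicAbv_apply, coeff_sub, coeff_X_zero, coeff_C_zero, zero_sub, norm_neg]
  have h1 : padicAbv p ((X - C α).coeff 1) = 1 := by
    rw [padicAbv_apply, coeff_sub, coeff_X_one, coeff_C_succ, sub_zero, norm_one]
  apply le_antisymm
  · obtain ⟨i, hi⟩ := exists_eq_gaussNorm (padicAbv p) 1 (X - C α)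
    rw [hi, one_pow, mul_one]
    rcases i with _ | _ | i
    · exact h0.le.trans (le_max_right _ _)
    · exact h1.le.trans (le_max_left _ _)
    · simp [coeff_X]
  · apply max_le
    · have h := le_gaussNorm (padicAbv p) (X - C α) zero_le_one 1
      rwa [one_pow, mul_one, h1] at h
    · have h := le_gaussNorm (padicAbv p) (X - C α) zero_le_one 0
      rwa [one_pow, mul_one, h0] at h

lemma gaussNorm_prod_X_sub_C (s : Multiset (PadicAlgCl p)) :
    (s.map fun α => X - C α).prod.gaussNorm (padicAbv p) 1 =
      (s.map fun α => max 1 ‖α‖).prod := by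
  induction s using Multiset.induction_on with
  | empty => simpa using gaussNorm_C (padicAbv p) 1 (1 : PadicAlgCl p)
  | cons a s ih =>
    simp only [Multiset.map_cons, Multiset.prod_cons]
    rw [gaussNorm_mul isNonarchimedean_padicAbv one_pos, gaussNorm_X_sub_C, ih]

lemma gaussNorm_map_eq_one {f : ℤ[X]} (hprim : f.IsPrimitive) :
    (f.map (algebraMap ℤ (PadicAlgCl p))).gaussNorm (padicAbv p) 1 = 1 := by
  have hcoeff (i : ℕ) : padicAbv p ((f.map (algebraMap ℤ (PadicAlgCl p))).coeff i) =
      ‖(f.coeff i : ℚ_[p])‖ := by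
    rw [coeff_map, ← PadicAlgCl.norm_intCast]
    rfl
  apply le_antisymm
  · obtain ⟨i, hi⟩ := exists_eq_gaussNorm (padicAbv p) 1 (f.map (algebraMap ℤ (PadicAlgCl p)))
    rw [hi, one_pow, mul_one, hcoeff]
    exact Padic.norm_int_le_one _
  · have hp : ¬ C (p : ℤ) ∣ f := fun h =>
      (Nat.prime_iff_prime_int.mp (Fact.out : p.Prime)).not_isUnit (hprim _ h)
    rw [C_dvd_iff_dvd_coeff] at hp
    push Not at hp
    obtain ⟨i, hi⟩ := hp
    have h := le_gaussNorm (padicAbv p) (f.map (algebraMap ℤ (PadicAlgCl p))) zero_le_one i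
    rw [one_pow, mul_one, hcoeff] at h
    refine le_trans (not_lt.mp fun hlt => hi ?_) h
    exact Padic.norm_intCast_lt_one_iff.mp hlt

/-- The local identity `‖aₙ‖ * ∏ max 1 ‖αᵢ‖ = 1`: both sides are the Gauss norm of `f`. -/
lemma norm_leadingCoeff_mul_prod_max {f : ℤ[X]} (hprim : f.IsPrimitive) :
    ‖(f.leadingCoeff : ℚ_[p])‖ *
      ((f.aroots (PadicAlgCl p)).map fun α => max 1 ‖α‖).prod = 1 := by
  have h := gaussNorm_map_eq_one (p := p) hprim
  rwa [(IsAlgClosed.splits (f.map (algebraMap ℤ (PadicAlgCl p)))).eq_prod_roots,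
    gaussNorm_mul isNonarchimedean_padicAbv one_pos, gaussNorm_C, gaussNorm_prod_X_sub_C,
    leadingCoeff_map_of_injective (FaithfulSMul.algebraMap_injective ℤ (PadicAlgCl p)),
    padicAbv_apply, eq_intCast, PadicAlgCl.norm_intCast] at h

end LocalFactor

lemma padicRootLogSum_eq {f : ℤ[X]} (hf : f ≠ 0) (hprim : f.IsPrimitive) (q : Nat.Primes) :
    padicRootLogSum f q = f.leadingCoeff.natAbs.factorization q * Real.log (q : ℕ) := by
  have : Fact (Nat.Prime (q : ℕ)) := ⟨q.2⟩
  have hterm (α : PadicAlgCl (q : ℕ)) :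
      (if 1 < padicClosureAbs (q : ℕ) α then Real.log (padicClosureAbs (q : ℕ) α) else 0) =
        Real.log (max 1 ‖α‖) := by
    rw [padicClosureAbs_eq_norm]
    split_ifs with h
    · rw [max_eq_right h.le]
    · rw [max_eq_left (not_lt.mp h), Real.log_one]
  have hsum (s : Multiset (PadicAlgCl (q : ℕ))) :
      (s.map fun α => Real.log (max 1 ‖α‖)).sum =
        Real.log (s.map fun α => max 1 ‖α‖).prod := by
    induction s using Multiset.induction_on with
    | empty => simp
    | cons a s ih =>
      simp only [Multiset.map_cons, Multiset.prod_cons, Multiset.sum_cons]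
      rw [ih, Real.log_mul (by positivity)]
      refine (Multiset.prod_pos fun x hx => ?_).ne'
      obtain ⟨a, -, rfl⟩ := Multiset.mem_map.mp hx
      positivity
  have hlc : f.leadingCoeff ≠ 0 := leadingCoeff_ne_zero.mpr hf
  have hnorm : ‖(f.leadingCoeff : ℚ_[(q : ℕ)])‖ =
      ((q : ℕ) : ℝ) ^ (-(f.leadingCoeff.natAbs.factorization q : ℤ)) := by
    rw [Padic.norm_eq_zpow_neg_valuation (by exact_mod_cast hlc), Padic.valuation_intCast,
      Nat.factorization_def _ q.2]
    rfl
  change ((f.aroots (PadicAlgCl (q : ℕ))).map _).sum = _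
  rw [Multiset.map_congr rfl fun α _ => hterm α, hsum,
    eq_inv_of_mul_eq_one_right (norm_leadingCoeff_mul_prod_max (p := (q : ℕ)) hprim), hnorm,
    Real.log_inv, Real.log_zpow]
  push_cast
  ring


open Polynomial

/-- For a primitive integer polynomial `f = ∑ aᵢ tⁱ` of degree `n` with `aₙ ≠ 0`,
`log |aₙ| = ∑_p ∑_{‖α_{p,i}‖_p > 1} log ‖α_{p,i}‖_p`, where for each prime `p` the inner sum runs
over the roots of `f` in the algebraic closure of `ℚ_p` counted with multiplicity; all but
finitely many summands of the sum over primes vanish. -/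
theorem log_abs_leadingCoeff_eq_tsum_padicRootLogSum
    (f : Polynomial ℤ) (n : ℕ)
    (hdeg : f.natDegree = n) (han : f.coeff n ≠ 0) (hprim : f.IsPrimitive) :
    {q : Nat.Primes | padicRootLogSum f q ≠ 0}.Finite ∧
    Real.log |(f.coeff n : ℝ)| = ∑' q : Nat.Primes, padicRootLogSum f q := by
  subst hdeg
  have hf : f ≠ 0 := by
    rintro rfl
    simp at han
  have hN : (f.leadingCoeff.natAbs : ℝ) = |(f.coeff f.natDegree : ℝ)| := by
    rw [coeff_natDegree, Nat.cast_natAbs, Int.cast_abs]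
  have hzero (q : Nat.Primes) (hq : (q : ℕ) ∉ f.leadingCoeff.natAbs.primeFactors) :
      padicRootLogSum f q = 0 := by
    rw [← Nat.support_factorization, Finsupp.notMem_support_iff] at hq
    simp [padicRootLogSum_eq hf hprim, hq]
  have hinj : Function.Injective (fun q : Nat.Primes => (q : ℕ)) := Subtype.val_injective
  set S : Finset Nat.Primes :=
    f.leadingCoeff.natAbs.primeFactors.preimage (fun q : Nat.Primes => (q : ℕ)) hinj.injOn
  have hS (q : Nat.Primes) (hq : q ∉ S) : padicRootLogSum f q = 0 :=
    hzero q fun h => hq (Finset.mem_preimage.mpr h)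
  refine ⟨S.finite_toSet.subset fun q hq => ?_, ?_⟩
  · by_contra h
    exact hq (hS q h)
  · rw [tsum_eq_sum hS, Finset.sum_congr rfl fun q _ => padicRootLogSum_eq hf hprim q,
      Finset.sum_preimage (fun q : Nat.Primes => (q : ℕ)) _ hinj.injOn
        (fun r : ℕ => (f.leadingCoeff.natAbs.factorization r : ℝ) * Real.log r)
        fun r hr h => (h ⟨⟨r, Nat.prime_of_mem_primeFactors hr⟩, rfl⟩).elim,
      ← hN, Real.log_nat_eq_sum_factorization]
    rfl
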